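/- For the noiseless closed-loop Markov jump linear system with one time-step delayed mode observations, the stacked second moments evolve linearly: vec²(M^{(k+1)}) = Λ · vec²(M^{(k)}) for all k ≥ 0, where M^{(k)} = [M_{ℓi}^{(k)}]_{ℓ,i=1}^N and Λ is the matrix representing the operator L in the vec² coordinates. -/

import Mathlib

/-!
The state `x_k` and the delayed mode `θ_{k-1}` are functions of the past
`θ_{-1}, …, θ_{k-1}, ν_0, …, ν_{k-1}`, so the Markov hypothesis lets one replace, for every
past-measurable integrand, integration over `{θ_{k+1} = j, ν_k = b, θ_k = i}` by integration over
`{θ_k = i}` times the factor `p_{ij} Pr(ν_k = b ∣ θ_k = i)` (`setIntegral_transition`; the hypothesis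
is exactly an equality of two measures restricted to the past σ-algebra). Splitting
`{θ_{k+1} = j, θ_k = i}` according to the values `b` of `ν_k` and `ℓ` of `θ_{k-1}`, the closed-loop
matrix is the constant `D = A + b B K_ℓ` on each piece, whence
`M_{ij}^{(k+1)} = ∑_{b,ℓ} p_{ij} Pr(ν_k = b ∣ θ_k = i) D M_{ℓi}^{(k)} D^*`.
Expanding the products gives `L_{ij}(M^{(k)})`. All moments are finite because `x_k` takes only
finitely many values.
-/

open MeasureTheory Matrix ProbabilityTheory Filter
open scoped BigOperators ComplexOrder

noncomputable section

/-- The canonical ring homomorphism from an `RCLike` field (`ℝ` or `ℂ`) to `ℂ`. -/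
def rcToComplex (𝕜 : Type*) [RCLike 𝕜] : 𝕜 →+* ℂ where
  toFun z := ⟨RCLike.re z, RCLike.im z⟩
  map_one' := by simp [Complex.ext_iff]
  map_mul' z w := by simp [Complex.ext_iff, RCLike.mul_re, RCLike.mul_im]
  map_zero' := by simp [Complex.ext_iff]
  map_add' z w := by simp [Complex.ext_iff]

/-- Spectral radius of a complex square matrix: the largest absolute value of its
(complex) eigenvalues. -/
def specRad {n : Type*} [Fintype n] [DecidableEq n] (M : Matrix n n ℂ) : ℝ :=
  sSup ((fun z => ‖z‖) '' spectrum ℂ M)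

/-- Spectral radius of a square matrix over `ℝ` or `ℂ`, computed over `ℂ`. -/
def specRadK {𝕜 : Type*} [RCLike 𝕜] {n : Type*} [Fintype n] [DecidableEq n]
    (M : Matrix n n 𝕜) : ℝ :=
  specRad (M.map (rcToComplex 𝕜))

variable {𝕜 : Type*} [RCLike 𝕜]

/-- `vec²` of an `N × N` array of `n_x × n_x` blocks `S = [S_{ℓi}]` (block `S ℓ i` sits in
block-row `ℓ` and block-column `i`): the index `((i, ℓ), (c, r))` addresses the entry in row `r`
and column `c` of the block `S_{ℓ i}`, corresponding to the stacking
`vec(S₁₁),…,vec(S_{N1}), vec(S₁₂),…,vec(S_{NN})` with column-major `vec`. -/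
def vec2 {N nx : ℕ} (S : Fin N → Fin N → Matrix (Fin nx) (Fin nx) 𝕜) :
    (Fin N × Fin N) × Fin nx × Fin nx → 𝕜 :=
  fun q => S q.1.2 q.1.1 q.2.2 q.2.1

/-- `vec²` of an `N × N` array of vectors in `𝕜^{n_x}`. -/
def vec2v {N nx : ℕ} (m : Fin N → Fin N → (Fin nx → 𝕜)) :
    (Fin N × Fin N) × Fin nx → 𝕜 :=
  fun q => m q.1.2 q.1.1 q.2

/-- The operator `L`, blockwise: `L_{ij}(S)`. -/
def Lop {N nx nu : ℕ} (A : Matrix (Fin nx) (Fin nx) 𝕜) (B : Matrix (Fin nx) (Fin nu) 𝕜)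
    (K : Fin N → Matrix (Fin nu) (Fin nx) 𝕜) (p : Fin N → Fin N → ℝ) (νh : Fin N → ℝ)
    (S : Fin N → Fin N → Matrix (Fin nx) (Fin nx) 𝕜) (i j : Fin N) :
    Matrix (Fin nx) (Fin nx) 𝕜 :=
  ((p i j : ℝ) : 𝕜) •
    (A * (∑ ℓ, S ℓ i) * Aᴴ
      + ((νh i : ℝ) : 𝕜) • (B * (∑ ℓ, K ℓ * S ℓ i * (K ℓ)ᴴ) * Bᴴ)
      + ((νh i : ℝ) : 𝕜) • (A * (∑ ℓ, S ℓ i * (K ℓ)ᴴ) * Bᴴ)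
      + ((νh i : ℝ) : 𝕜) • (B * (∑ ℓ, K ℓ * S ℓ i) * Aᴴ))

/-- The operator `T`, blockwise: `T_{ℓi}(S)`. -/
def Tadj {N nx nu : ℕ} (A : Matrix (Fin nx) (Fin nx) 𝕜) (B : Matrix (Fin nx) (Fin nu) 𝕜)
    (K : Fin N → Matrix (Fin nu) (Fin nx) 𝕜) (p : Fin N → Fin N → ℝ) (νh : Fin N → ℝ)
    (S : Fin N → Fin N → Matrix (Fin nx) (Fin nx) 𝕜) (ℓ i : Fin N) :
    Matrix (Fin nx) (Fin nx) 𝕜 :=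
  Aᴴ * (∑ j, ((p i j : ℝ) : 𝕜) • S i j) * A
    + ((νh i : ℝ) : 𝕜) • ((K ℓ)ᴴ * Bᴴ * (∑ j, ((p i j : ℝ) : 𝕜) • S i j) * (B * K ℓ))
    + ((νh i : ℝ) : 𝕜) • ((K ℓ)ᴴ * Bᴴ * (∑ j, ((p i j : ℝ) : 𝕜) • S i j) * A)
    + ((νh i : ℝ) : 𝕜) • (Aᴴ * (∑ j, ((p i j : ℝ) : 𝕜) • S i j) * (B * K ℓ))

/-- σ-algebra of the "past" at time `k`: generated by `θ_{-1},…,θ_{k-1}` and `ν_0,…,ν_{k-1}`. -/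
def pastSig {Ω : Type*} {N : ℕ} (θ : ℤ → Ω → Fin N) (ν : ℕ → Ω → Bool) (k : ℕ) :
    MeasurableSpace Ω :=
  (⨆ t : ℤ, ⨆ (_ : -1 ≤ t), ⨆ (_ : t < (k : ℤ)), MeasurableSpace.comap (θ t) ⊤) ⊔
    ⨆ t : ℕ, ⨆ (_ : t < k), MeasurableSpace.comap (ν t) ⊤

/-- σ-algebra generated by `θ_{-1},…,θ_{k-1}`. -/
def pastTheta {Ω : Type*} {N : ℕ} (θ : ℤ → Ω → Fin N) (k : ℤ) : MeasurableSpace Ω :=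
  ⨆ t : ℤ, ⨆ (_ : -1 ≤ t), ⨆ (_ : t < k), MeasurableSpace.comap (θ t) ⊤

/-- σ-algebra generated by the pairs `(θ_t, θ_{t-1})` for `0 ≤ t ≤ k-1`. -/
def pastPair {Ω : Type*} {N : ℕ} (θ : ℤ → Ω → Fin N) (k : ℕ) : MeasurableSpace Ω :=
  ⨆ t : ℕ, ⨆ (_ : t < k),
    MeasurableSpace.comap (fun ω => (θ (t : ℤ) ω, θ ((t : ℤ) - 1) ω)) ⊤

/-- Indicator-weighted first moment `m_{ℓi}^{(k)} = E[x_k 1_{θ_k = i, θ_{k-1} = ℓ}]`. -/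
def mMom {Ω : Type*} [MeasurableSpace Ω] (μ : Measure Ω) {N nx : ℕ}
    (θ : ℤ → Ω → Fin N) (x : ℕ → Ω → Fin nx → 𝕜) (k : ℕ) (ℓ i : Fin N) : Fin nx → 𝕜 :=
  fun r => ∫ ω in {ω | θ (k : ℤ) ω = i ∧ θ ((k : ℤ) - 1) ω = ℓ}, x k ω r ∂μ

/-- Indicator-weighted second moment `M_{ℓi}^{(k)} = E[x_k x_k^* 1_{θ_k = i, θ_{k-1} = ℓ}]`. -/
def MMom {Ω : Type*} [MeasurableSpace Ω] (μ : Measure Ω) {N nx : ℕ}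
    (θ : ℤ → Ω → Fin N) (x : ℕ → Ω → Fin nx → 𝕜) (k : ℕ) (ℓ i : Fin N) :
    Matrix (Fin nx) (Fin nx) 𝕜 :=
  Matrix.of fun r c =>
    ∫ ω in {ω | θ (k : ℤ) ω = i ∧ θ ((k : ℤ) - 1) ω = ℓ}, x k ω r * star (x k ω c) ∂μ

/-- Joint probability `π_{ℓi}^{(k)} = Pr(θ_k = i, θ_{k-1} = ℓ)`. -/
def piP {Ω : Type*} [MeasurableSpace Ω] (μ : Measure Ω) {N : ℕ}
    (θ : ℤ → Ω → Fin N) (k : ℕ) (ℓ i : Fin N) : ℝ :=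
  (μ {ω | θ (k : ℤ) ω = i ∧ θ ((k : ℤ) - 1) ω = ℓ}).toReal

/-- A measure on a real vector space is Gaussian if every real-linear functional pushes it
forward to a one-dimensional Gaussian law. -/
def IsGaussianLaw {E : Type*} [AddCommGroup E] [Module ℝ E] [MeasurableSpace E]
    (γ : Measure E) : Prop :=
  ∀ L : E →ₗ[ℝ] ℝ, ∃ (m : ℝ) (v : NNReal), γ.map L = ProbabilityTheory.gaussianReal m v

section SecondMoment

variable {N nx nu : ℕ} {Ω : Type*}

lemma pastSig_le [mΩ : MeasurableSpace Ω] {θ : ℤ → Ω → Fin N} (hθ : ∀ t, Measurable (θ t))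
    {ν : ℕ → Ω → Bool} (hν : ∀ t, Measurable (ν t)) (k : ℕ) : pastSig θ ν k ≤ mΩ := by
  refine sup_le (iSup_le fun t => iSup_le fun _ => iSup_le fun _ => ?_)
    (iSup_le fun t => iSup_le fun _ => ?_)
  · exact (hθ t).comap_le
  · exact (hν t).comap_le

lemma measurable_theta_pastSig (θ : ℤ → Ω → Fin N) (ν : ℕ → Ω → Bool) {k : ℕ} {t : ℤ}
    (h1 : -1 ≤ t) (h2 : t < k) : Measurable[pastSig θ ν k] (θ t) := by
  rw [measurable_iff_comap_le]
  exact le_sup_of_le_left (le_iSup_of_le t (le_iSup_of_le h1 (le_iSup_of_le h2 le_rfl)))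

lemma measurable_nu_pastSig (θ : ℤ → Ω → Fin N) (ν : ℕ → Ω → Bool) {k t : ℕ} (h : t < k) :
    Measurable[pastSig θ ν k] (ν t) := by
  rw [measurable_iff_comap_le]
  exact le_sup_of_le_right (le_iSup_of_le t (le_iSup_of_le h le_rfl))

lemma pastSig_mono (θ : ℤ → Ω → Fin N) (ν : ℕ → Ω → Bool) (k : ℕ) :
    pastSig θ ν k ≤ pastSig θ ν (k + 1) := by
  refine sup_le (iSup_le fun t => iSup_le fun h1 => iSup_le fun h2 => ?_)
    (iSup_le fun t => iSup_le fun h => ?_)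
  · exact (measurable_theta_pastSig θ ν h1 (by push_cast; omega)).comap_le
  · exact (measurable_nu_pastSig θ ν (by omega)).comap_le

/-- The closed-loop matrix `A + b B K_ℓ`. -/
def closedLoop (A : Matrix (Fin nx) (Fin nx) 𝕜) (B : Matrix (Fin nx) (Fin nu) 𝕜)
    (K : Fin N → Matrix (Fin nu) (Fin nx) 𝕜) (b : Bool) (ℓ : Fin N) :
    Matrix (Fin nx) (Fin nx) 𝕜 :=
  A + (if b then (1 : 𝕜) else 0) • (B * K ℓ)

section State

variable {θ : ℤ → Ω → Fin N} {ν : ℕ → Ω → Bool} {x0 : Fin nx → 𝕜} {x : ℕ → Ω → Fin nx → 𝕜}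
  {D : Bool → Fin N → Matrix (Fin nx) (Fin nx) 𝕜}

/-- `x_k` depends only on `θ_{-1}, …, θ_{k-2}` and `ν_0, …, ν_{k-1}`: the feedback uses the delayed
mode. -/
lemma measurable_state_pastSig (hx0 : ∀ ω, x 0 ω = x0)
    (hxrec : ∀ (k : ℕ) (ω : Ω), x (k + 1) ω = D (ν k ω) (θ ((k : ℤ) - 1) ω) *ᵥ x k ω)
    (k : ℕ) (r : Fin nx) : Measurable[pastSig θ ν k] (fun ω => x k ω r) := by
  induction k generalizing r with
  | zero => simp only [hx0]; exact measurable_const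
  | succ k ih =>
    simp only [hxrec, Matrix.mulVec, dotProduct]
    have hD (a : Fin nx) : Measurable[pastSig θ ν (k + 1)]
        (fun ω => D (ν k ω) (θ ((k : ℤ) - 1) ω) r a) := by
      have h1 : Measurable[pastSig θ ν (k + 1)] (ν k) := measurable_nu_pastSig θ ν (by omega)
      have h2 : Measurable[pastSig θ ν (k + 1)] (θ ((k : ℤ) - 1)) :=
        measurable_theta_pastSig θ ν (by omega) (by push_cast; omega)
      exact (measurable_of_finite (fun q : Bool × Fin N => D q.1 q.2 r a)).comp (h1.prodMk h2)
    exact Finset.measurable_fun_sum _ fun a _ =>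
      (hD a).mul ((ih a).mono (pastSig_mono θ ν k) le_rfl)

lemma finite_range_state (hx0 : ∀ ω, x 0 ω = x0)
    (hxrec : ∀ (k : ℕ) (ω : Ω), x (k + 1) ω = D (ν k ω) (θ ((k : ℤ) - 1) ω) *ᵥ x k ω)
    (k : ℕ) : (Set.range (x k)).Finite := by
  induction k with
  | zero =>
    refine (Set.finite_singleton x0).subset ?_
    rintro _ ⟨ω, rfl⟩
    exact hx0 ω
  | succ k ih =>
    refine (((Set.finite_univ (α := Bool × Fin N)).prod ih).image
      (fun q => D q.1.1 q.1.2 *ᵥ q.2)).subset ?_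
    rintro _ ⟨ω, rfl⟩
    exact ⟨((ν k ω, θ ((k : ℤ) - 1) ω), x k ω), ⟨Set.mem_univ _, ω, rfl⟩, (hxrec k ω).symm⟩

lemma integrable_state_mul_star [MeasurableSpace Ω] (μ : Measure Ω) [IsFiniteMeasure μ]
    (hθ : ∀ t, Measurable (θ t)) (hν : ∀ t, Measurable (ν t)) (hx0 : ∀ ω, x 0 ω = x0)
    (hxrec : ∀ (k : ℕ) (ω : Ω), x (k + 1) ω = D (ν k ω) (θ ((k : ℤ) - 1) ω) *ᵥ x k ω)
    (k : ℕ) (r c : Fin nx) : Integrable (fun ω => x k ω r * star (x k ω c)) μ := by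
  have hm (r : Fin nx) : Measurable (fun ω => x k ω r) :=
    (measurable_state_pastSig hx0 hxrec k r).mono (pastSig_le hθ hν k) le_rfl
  obtain ⟨C, hC⟩ := ((finite_range_state hx0 hxrec k).image
    (fun v => ‖v r * star (v c)‖)).bddAbove
  refine Integrable.of_bound
    ((hm r).mul (RCLike.continuous_conj.measurable.comp (hm c))).aestronglyMeasurable C
    (ae_of_all _ fun ω => hC ⟨x k ω, ⟨ω, rfl⟩, rfl⟩)

end State

/-- If two events have proportional probabilities on every event of a sub-σ-algebra `m`, then
integrals of `m`-measurable functions over them are proportional as well. -/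
lemma setIntegral_transition {m : MeasurableSpace Ω} [mΩ : MeasurableSpace Ω] (hm : m ≤ mΩ)
    (μ : Measure Ω) [IsFiniteMeasure μ] {S T : Set Ω} {w : ℝ} (hw : 0 ≤ w)
    (h : ∀ E, MeasurableSet[m] E → (μ (S ∩ E)).toReal = w * (μ (T ∩ E)).toReal)
    {g : Ω → 𝕜} (hg : Measurable[m] g) {F : Set Ω} (hF : MeasurableSet[m] F) :
    ∫ ω in S ∩ F, g ω ∂μ = (w : 𝕜) * ∫ ω in T ∩ F, g ω ∂μ := by
  have key : (μ.restrict (S ∩ F)).trim hm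
      = ENNReal.ofReal w • (μ.restrict (T ∩ F)).trim hm := by
    refine @Measure.ext _ m _ _ fun E hE => ?_
    rw [Measure.smul_apply, trim_measurableSet_eq hm hE, trim_measurableSet_eq hm hE,
      Measure.restrict_apply (hm E hE), Measure.restrict_apply (hm E hE), smul_eq_mul,
      ← ENNReal.toReal_eq_toReal_iff' (measure_ne_top _ _)
        (ENNReal.mul_ne_top ENNReal.ofReal_ne_top (measure_ne_top _ _)),
      ENNReal.toReal_mul, ENNReal.toReal_ofReal hw]
    have := h (F ∩ E) (hF.inter hE)
    rwa [← Set.inter_assoc, ← Set.inter_assoc, Set.inter_comm _ E, Set.inter_comm _ E] at this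
  have hgs : StronglyMeasurable[m] g := hg.stronglyMeasurable
  rw [integral_trim hm hgs, key, integral_smul_measure, ← integral_trim hm hgs,
    ENNReal.toReal_ofReal hw, RCLike.real_smul_eq_coe_mul]

/-- Averaging `D M D^*` over the Bernoulli variable `b` and summing over `ℓ` gives `L`. -/
lemma sum_closedLoop_eq_Lop (A : Matrix (Fin nx) (Fin nx) 𝕜) (B : Matrix (Fin nx) (Fin nu) 𝕜)
    (K : Fin N → Matrix (Fin nu) (Fin nx) 𝕜) (p : Fin N → Fin N → ℝ) (νh : Fin N → ℝ)
    (S : Fin N → Fin N → Matrix (Fin nx) (Fin nx) 𝕜) (i j : Fin N) :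
    ∑ q : Bool × Fin N, ((p i j * (if q.1 then νh i else 1 - νh i) : ℝ) : 𝕜) •
      (closedLoop A B K q.1 q.2 * S q.2 i * (closedLoop A B K q.1 q.2)ᴴ)
      = Lop A B K p νh S i j := by
  rw [Fintype.sum_prod_type_right, Lop]
  simp only [Matrix.mul_sum, Matrix.sum_mul, Finset.smul_sum, ← Finset.sum_add_distrib]
  refine Finset.sum_congr rfl fun ℓ _ => ?_
  simp only [Fintype.sum_bool, closedLoop, if_true, Bool.false_eq_true, if_false, one_smul,
    zero_smul, add_zero, Matrix.conjTranspose_add, Matrix.conjTranspose_mul, Matrix.add_mul,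
    Matrix.mul_add, Matrix.mul_assoc, Matrix.conjTranspose_zero, Matrix.zero_mul, Matrix.mul_zero]
  push_cast
  module

end SecondMoment

/-- The stacked second moments evolve linearly:
`vec²(M^{(k+1)}) = Λ vec²(M^{(k)})`. -/
theorem secondMoment_linear_evolution
    {𝕜 : Type*} [RCLike 𝕜]
    {N nx nu : ℕ} (hN : 1 ≤ N) (hnx : 1 ≤ nx) (hnu : 1 ≤ nu)
    (A : Matrix (Fin nx) (Fin nx) 𝕜) (B : Matrix (Fin nx) (Fin nu) 𝕜)
    (K : Fin N → Matrix (Fin nu) (Fin nx) 𝕜)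
    (p : Fin N → Fin N → ℝ) (hp_nonneg : ∀ i j, 0 ≤ p i j) (hp_row : ∀ i, ∑ j, p i j = 1)
    (νh : Fin N → ℝ) (hνh : ∀ i, νh i ∈ Set.Icc (0 : ℝ) 1)
    {Ω : Type*} [MeasurableSpace Ω] (μ : Measure Ω) [IsProbabilityMeasure μ]
    (θ : ℤ → Ω → Fin N) (hθ : ∀ t, Measurable (θ t))
    (ν : ℕ → Ω → Bool) (hν : ∀ t, Measurable (ν t))
    (hMarkov : ∀ (k : ℕ) (i j : Fin N) (b : Bool) (E : Set Ω),
      MeasurableSet[pastSig θ ν k] E →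
      (μ ({ω | θ ((k : ℤ) + 1) ω = j ∧ ν k ω = b ∧ θ (k : ℤ) ω = i} ∩ E)).toReal
        = p i j * (if b then νh i else 1 - νh i) *
            (μ ({ω | θ (k : ℤ) ω = i} ∩ E)).toReal)
    (x0 : Fin nx → 𝕜) (x : ℕ → Ω → Fin nx → 𝕜)
    (hx0 : ∀ ω, x 0 ω = x0)
    (hxrec : ∀ (k : ℕ) (ω : Ω),
      x (k + 1) ω
        = Matrix.mulVec (A + (if ν k ω then (1 : 𝕜) else 0) • (B * K (θ ((k : ℤ) - 1) ω)))
            (x k ω))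
    (Λ : Matrix ((Fin N × Fin N) × Fin nx × Fin nx) ((Fin N × Fin N) × Fin nx × Fin nx) 𝕜)
    (hΛ : ∀ S : Fin N → Fin N → Matrix (Fin nx) (Fin nx) 𝕜,
      vec2 (Lop A B K p νh S) = Matrix.mulVec Λ (vec2 S)) :
    ∀ k : ℕ,
      vec2 (MMom μ θ x (k + 1)) = Matrix.mulVec Λ (vec2 (MMom μ θ x k)) := by
  intro k
  rw [← hΛ]
  refine congrArg vec2 (funext fun i => funext fun j => ?_)
  rw [← sum_closedLoop_eq_Lop]
  set D := closedLoop A B K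
  replace hxrec : ∀ (k : ℕ) (ω : Ω), x (k + 1) ω = D (ν k ω) (θ ((k : ℤ) - 1) ω) *ᵥ x k ω := hxrec
  ext r c
  let T : Bool → Set Ω := fun b => {ω | θ ((k : ℤ) + 1) ω = j ∧ ν k ω = b ∧ θ (k : ℤ) ω = i}
  let F : Fin N → Set Ω := fun ℓ => {ω | θ ((k : ℤ) - 1) ω = ℓ}
  have hF (ℓ : Fin N) : MeasurableSet[pastSig θ ν k] (F ℓ) :=
    measurable_theta_pastSig θ ν (by omega) (by omega) (measurableSet_singleton ℓ)
  have hle := pastSig_le hθ hν k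
  have hT (b : Bool) : MeasurableSet (T b) :=
    (hθ _ (measurableSet_singleton j)).inter
      ((hν k (measurableSet_singleton b)).inter (hθ _ (measurableSet_singleton i)))
  have hint (k : ℕ) (r c : Fin nx) : Integrable (fun ω => x k ω r * star (x k ω c)) μ :=
    integrable_state_mul_star μ hθ hν hx0 hxrec k r c
  have hunion : {ω | θ ((k + 1 : ℕ) : ℤ) ω = j ∧ θ (((k + 1 : ℕ) : ℤ) - 1) ω = i}
      = ⋃ q : Bool × Fin N, T q.1 ∩ F q.2 := by
    ext ω
    simp [T, F]
  have hdisj : Pairwise (Function.onFun Disjoint fun q : Bool × Fin N => T q.1 ∩ F q.2) := by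
    intro q₁ q₂ hq
    refine Set.disjoint_left.2 fun ω h hr => hq ?_
    exact Prod.ext (h.1.2.1.symm.trans hr.1.2.1) (h.2.symm.trans hr.2)
  -- The transition rule applied to the second moments of the past-measurable state.
  have htrans (q : Bool × Fin N) (a d : Fin nx) :
      ∫ ω in T q.1 ∩ F q.2, x k ω a * star (x k ω d) ∂μ
        = ((p i j * (if q.1 then νh i else 1 - νh i) : ℝ) : 𝕜) * MMom μ θ x k q.2 i a d := by
    have hw : 0 ≤ p i j * (if q.1 then νh i else 1 - νh i) := by
      refine mul_nonneg (hp_nonneg i j) ?_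
      split_ifs
      · exact (hνh i).1
      · exact sub_nonneg.2 (hνh i).2
    have hm := measurable_state_pastSig hx0 hxrec k
    exact setIntegral_transition hle μ hw (hMarkov k i j q.1)
      ((hm a).mul (RCLike.continuous_conj.measurable.comp (hm d))) (hF q.2)
  have hpiece (q : Bool × Fin N) :
      ∫ ω in T q.1 ∩ F q.2, x (k + 1) ω r * star (x (k + 1) ω c) ∂μ
        = ∑ a, ∑ d, D q.1 q.2 r a * star (D q.1 q.2 c d) *
            ∫ ω in T q.1 ∩ F q.2, x k ω a * star (x k ω d) ∂μ := by
    have hexp : ∀ ω ∈ T q.1 ∩ F q.2, x (k + 1) ω r * star (x (k + 1) ω c)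
        = ∑ a, ∑ d, D q.1 q.2 r a * star (D q.1 q.2 c d) * (x k ω a * star (x k ω d)) := by
      rintro ω ⟨⟨-, hb, -⟩, hl : θ ((k : ℤ) - 1) ω = q.2⟩
      rw [hxrec, hb, hl]
      simp only [Matrix.mulVec, dotProduct, star_sum, star_mul', Finset.sum_mul_sum]
      exact Finset.sum_congr rfl fun a _ => Finset.sum_congr rfl fun d _ => by ring
    rw [setIntegral_congr_fun ((hT q.1).inter (hle _ (hF q.2))) hexp, integral_finsetSum]
    · refine Finset.sum_congr rfl fun a _ => ?_
      rw [integral_finsetSum]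
      · exact Finset.sum_congr rfl fun d _ => integral_const_mul _ _
      · exact fun d _ => ((hint k a d).const_mul _).integrableOn
    · exact fun a _ => integrable_finsetSum _ fun d _ => ((hint k a d).const_mul _).integrableOn
  change ∫ ω in {ω | θ ((k + 1 : ℕ) : ℤ) ω = j ∧ θ (((k + 1 : ℕ) : ℤ) - 1) ω = i},
    x (k + 1) ω r * star (x (k + 1) ω c) ∂μ = _
  rw [hunion,
    integral_iUnion_fintype (s := fun q : Bool × Fin N => T q.1 ∩ F q.2)
      (fun q => (hT q.1).inter (hle _ (hF q.2))) hdisj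
      (fun q => (hint (k + 1) r c).integrableOn), Matrix.sum_apply]
  refine Finset.sum_congr rfl fun q _ => ?_
  rw [hpiece, Matrix.smul_apply, Matrix.mul_apply, smul_eq_mul, Finset.mul_sum, Finset.sum_comm]
  refine Finset.sum_congr rfl fun d _ => ?_
  rw [Matrix.mul_apply, Finset.sum_mul, Finset.mul_sum]
  refine Finset.sum_congr rfl fun a _ => ?_
  rw [htrans, Matrix.conjTranspose_apply]
  ring
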